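/- For any 1/2 < t < 1 and any positive integer n₁ ≥ 2e^{16/(1-t)²}, one has (7/40)·n₁/((1−t)·p_{n₁}^t) < ∑_{n=1}^{n₁−1} p_n^{-t} < (20/3)·2^t·n₁/((1−t)·p_{n₁}^t). -/

import Mathlib

/-- The `n`-th prime number, 1-indexed: `nthPrime 1 = 2`, `nthPrime 2 = 3`, ... -/
noncomputable def nthPrime (n : ℕ) : ℕ := Nat.nth Nat.Prime (n - 1)

theorem nthPrime_mono : Monotone nthPrime := fun _ _ h =>
  Nat.nth_monotone Nat.infinite_setOfPred_prime (Nat.sub_le_sub_right h 1)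

theorem lt_nthPrime {n : ℕ} (hn : 1 ≤ n) : n < nthPrime n := by
  have := Nat.add_two_le_nth_prime (n - 1)
  unfold nthPrime
  omega

theorem primeCounting_nthPrime {n : ℕ} (hn : 1 ≤ n) : Nat.primeCounting (nthPrime n) = n := by
  have h := Nat.count_nth_succ_of_infinite Nat.infinite_setOfPred_prime (n - 1)
  rw [Nat.primeCounting_eq_primeCounting'_succ]
  unfold nthPrime Nat.primeCounting'
  rw [h]
  omega

/-- Chebyshev's upper bound for the prime counting function, with an explicit range. -/
theorem primeCounting_mul_log_le {p : ℕ} (hp : Real.exp 32 ≤ p) :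
    Nat.primeCounting p * Real.log p ≤ 2.9 * p := by
  have hx1 : (1 : ℝ) < p := (Real.one_lt_exp_iff.2 (by norm_num)).trans_le hp
  have hx0 : (0 : ℝ) < p := by linarith
  have h := Chebyshev.pi_le_log4_mul_div hx1
  rw [Nat.floor_natCast, Real.log_sqrt hx0.le] at h
  have hl : 0 < Real.log p := Real.log_pos hx1
  have h2 := mul_le_mul_of_nonneg_right h hl.le
  have e1 : (Real.log 4 * p / (Real.log p / 2) + √p) * Real.log p
      = 2 * Real.log 4 * p + √p * Real.log p := by field_simp
  have h4 : Real.log 4 = 2 * Real.log 2 := by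
    rw [show (4 : ℝ) = 2 ^ 2 by norm_num, Real.log_pow]; norm_num
  have hlog2 := Real.log_two_lt_d9
  have h3 : Real.log p ≤ 0.1 * √p := by
    have k1 := Real.log_le_rpow_div hx0.le (show (0 : ℝ) < 1 / 4 by norm_num)
    have k2 : √(p : ℝ) = (p : ℝ) ^ (1 / 4 : ℝ) * (p : ℝ) ^ (1 / 4 : ℝ) := by
      rw [← Real.rpow_add hx0, Real.sqrt_eq_rpow]; norm_num
    have k3 : (40 : ℝ) ≤ (p : ℝ) ^ (1 / 4 : ℝ) := by
      calc (40 : ℝ) ≤ 8 ^ 3 / (Nat.factorial 3 : ℕ) := by norm_num [Nat.factorial]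
        _ ≤ Real.exp 8 := Real.pow_div_factorial_le_exp 8 (by norm_num) 3
        _ = (Real.exp 32) ^ (1 / 4 : ℝ) := by rw [← Real.exp_mul]; norm_num
        _ ≤ _ := Real.rpow_le_rpow (Real.exp_pos _).le hp (by norm_num)
    rw [k2]
    nlinarith
  have h5 : √(p : ℝ) * Real.log p ≤ 0.1 * p := by
    calc √(p : ℝ) * Real.log p ≤ √(p : ℝ) * (0.1 * √p) := by gcongr
      _ = 0.1 * p := by rw [mul_left_comm, Real.mul_self_sqrt hx0.le]
  rw [e1, h4] at h2
  nlinarith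

theorem nthPrime_ge {n : ℕ} (hn : 1 ≤ n) (h : Real.exp 32 ≤ nthPrime n) :
    n * Real.log (nthPrime n) / 2.9 ≤ nthPrime n := by
  have := primeCounting_mul_log_le h
  rw [primeCounting_nthPrime hn] at this
  rw [div_le_iff₀ (by norm_num)]
  linarith

theorem nthPrime_mul_log_two_le {n : ℕ} (hn : 1 ≤ n) :
    nthPrime n * Real.log 2 ≤ (n + 1) * Real.log (nthPrime n + 1) := by
  have h := Chebyshev.pi_ge (nthPrime n)
  have h2 : (1 : ℝ) < nthPrime n := by
    exact_mod_cast lt_of_le_of_lt hn (lt_nthPrime hn)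
  rw [primeCounting_nthPrime hn, div_le_iff₀ (Real.log_pos h2)] at h
  have h3 : Real.log (nthPrime n) ≤ Real.log (nthPrime n + 1) :=
    Real.log_le_log (by linarith) (by linarith)
  have h4 : n * Real.log (nthPrime n) ≤ n * Real.log (nthPrime n + 1) := by gcongr
  linarith

theorem add_one_rpow_sub_rpow_le {s x : ℝ} (hs0 : 0 ≤ s) (hs1 : s ≤ 1) (hx : 0 < x) :
    (x + 1) ^ s - x ^ s ≤ s * x ^ (s - 1) := by
  have h := rpow_one_add_le_one_add_mul_self (s := 1 / x)
    (by have : 0 < 1 / x := by positivity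
        linarith) hs0 hs1
  have e : x + 1 = x * (1 + 1 / x) := by field_simp
  rw [e, Real.mul_rpow hx.le (by positivity), Real.rpow_sub_one hx.ne']
  have := mul_le_mul_of_nonneg_left h (Real.rpow_nonneg hx.le s)
  calc _ ≤ x ^ s * (1 + s * (1 / x)) - x ^ s := by linarith
    _ = _ := by ring

theorem mul_rpow_sub_one_le {s x : ℝ} (hs0 : 0 ≤ s) (hs1 : s ≤ 1) (hx : 0 ≤ x) :
    s * (x + 1) ^ (s - 1) ≤ (x + 1) ^ s - x ^ s := by
  have hy : 0 < x + 1 := by linarith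
  have h1 : 1 / (x + 1) ≤ 1 := by rw [div_le_one hy]; linarith
  have h := rpow_one_add_le_one_add_mul_self (s := -(1 / (x + 1))) (by linarith) hs0 hs1
  have e : x = (x + 1) * (1 + -(1 / (x + 1))) := by field_simp; ring
  have e2 : x ^ s = (x + 1) ^ s * (1 + -(1 / (x + 1))) ^ s := by
    rw [← Real.mul_rpow hy.le (by linarith), ← e]
  rw [e2, Real.rpow_sub_one hy.ne']
  have := mul_le_mul_of_nonneg_left h (Real.rpow_nonneg hy.le s)
  calc _ = (x + 1) ^ s - (x + 1) ^ s * (1 + s * -(1 / (x + 1))) := by ring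
    _ ≤ _ := by linarith

theorem sum_rpow_neg_le {t : ℝ} (ht0 : 0 ≤ t) (ht1 : t < 1) (m : ℕ) :
    ∑ n ∈ Finset.Icc 1 m, (n : ℝ) ^ (-t) ≤ (m : ℝ) ^ (1 - t) / (1 - t) := by
  have hs : 0 < 1 - t := by linarith
  induction m with
  | zero => simp [Real.zero_rpow hs.ne']
  | succ m ih =>
    rw [Finset.sum_Icc_succ_top (by omega)]
    have h := mul_rpow_sub_one_le hs.le (by linarith) (Nat.cast_nonneg (α := ℝ) m)
    rw [show 1 - t - 1 = -t by ring] at h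
    rw [le_div_iff₀ hs] at ih ⊢
    push_cast
    linarith

theorem le_sum_rpow_neg {t : ℝ} (ht0 : 0 ≤ t) (ht1 : t < 1) (m : ℕ) :
    (((m : ℝ) + 2) ^ (1 - t) - 2) / (1 - t) ≤
      ∑ n ∈ Finset.Icc 1 m, ((n : ℝ) + 1) ^ (-t) := by
  have hs : 0 < 1 - t := by linarith
  induction m with
  | zero =>
    have : (2 : ℝ) ^ (1 - t) ≤ 2 ^ (1 : ℝ) :=
      Real.rpow_le_rpow_of_exponent_le (by norm_num) (by linarith)
    rw [Real.rpow_one] at this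
    simpa using div_nonpos_of_nonpos_of_nonneg (by linarith : (2 : ℝ) ^ (1 - t) - 2 ≤ 0) hs.le
  | succ m ih =>
    rw [Finset.sum_Icc_succ_top (by omega)]
    have h := add_one_rpow_sub_rpow_le (x := (m : ℝ) + 2) hs.le (by linarith) (by positivity)
    rw [show 1 - t - 1 = -t by ring] at h
    rw [div_le_iff₀ hs] at ih ⊢
    push_cast
    rw [show (m : ℝ) + 1 + 2 = m + 2 + 1 by ring, show (m : ℝ) + 1 + 1 = m + 2 by ring]
    linarith

theorem log_nthPrime_add_one_le {N : ℕ} (hN : 64 ≤ Real.log N) :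
    Real.log (nthPrime N + 1) ≤ 1.25 * Real.log N := by
  have hN0 : (0 : ℝ) < N := by
    rcases Nat.eq_zero_or_pos N with h | h
    · subst h; norm_num at hN
    · exact_mod_cast h
  have hN1 : 1 ≤ N := by exact_mod_cast hN0
  have hNbig : (64 : ℝ) < N := by linarith [Real.log_le_sub_one_of_pos hN0]
  have hPN : (N : ℝ) < nthPrime N := by exact_mod_cast lt_nthPrime hN1
  have h := nthPrime_mul_log_two_le hN1
  set Q : ℝ := (nthPrime N : ℝ) + 1 with hQ
  have hQ0 : 0 < Q := by linarith
  have h1 := Real.log_le_rpow_div hQ0.le (show (0 : ℝ) < 1 / 10 by norm_num)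
  have hr : 0 < Q ^ (1 / 10 : ℝ) := Real.rpow_pos_of_pos hQ0 _
  have l2 := Real.log_two_gt_d9
  have l2' := Real.log_two_lt_d9
  have h2 : Q ≤ 16 * N * Q ^ (1 / 10 : ℝ) := by
    have a1 : (N + 1 : ℝ) * Real.log Q ≤ (N + 1) * (Q ^ (1 / 10 : ℝ) / (1 / 10)) := by gcongr
    have a2 : 0.67 * Q ≤ nthPrime N * Real.log 2 := by nlinarith
    nlinarith
  have h3 := Real.log_le_log hQ0 h2
  rw [Real.log_mul (by positivity) hr.ne', Real.log_mul (by norm_num) hN0.ne', Real.log_rpow hQ0,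
    show (16 : ℝ) = 2 ^ 4 by norm_num, Real.log_pow] at h3
  push_cast at h3
  linarith

theorem lt_sum_nthPrime_rpow_neg {t : ℝ} (ht₁ : 1 / 2 < t) (ht₂ : t < 1) {N : ℕ}
    (hN : 64 ≤ Real.log N) (hNs : 10 < (N : ℝ) ^ (1 - t)) :
    7 / 40 * ((N : ℝ) / ((1 - t) * (nthPrime N : ℝ) ^ t)) <
      ∑ n ∈ Finset.Icc 1 (N - 1), (nthPrime n : ℝ) ^ (-t) := by
  have hs : 0 < 1 - t := by linarith
  have hN0 : (0 : ℝ) < N := by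
    rcases Nat.eq_zero_or_pos N with h | h
    · subst h; norm_num at hN
    · exact_mod_cast h
  have hN1 : 1 ≤ N := by exact_mod_cast hN0
  have hPN : (N : ℝ) < nthPrime N := by exact_mod_cast lt_nthPrime hN1
  have hP0 : (0 : ℝ) < nthPrime N := by linarith
  have hNexp : Real.exp 64 ≤ N := (Real.le_log_iff_exp_le hN0).1 hN
  have l2 := Real.log_two_gt_d9
  have l2' := Real.log_two_lt_d9
  set M' := Real.log (nthPrime N + 1) with hM'
  have hMlow : 64 ≤ Real.log (nthPrime N) := hN.trans (Real.log_le_log hN0 hPN.le)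
  have hMM' : M' ≤ 1.02 * Real.log (nthPrime N) := by
    have : M' ≤ Real.log (2 * nthPrime N) := by
      have : (1 : ℝ) ≤ N := by exact_mod_cast hN1
      exact Real.log_le_log (by positivity) (by linarith)
    rw [Real.log_mul (by norm_num) hP0.ne'] at this
    linarith
  have hM'0 : 0 < M' := Real.log_pos (by linarith)
  set X := M' / Real.log 2 with hX
  have hX0 : 0 < X := by positivity
  have hterm : ∀ n ∈ Finset.Icc 1 (N - 1),
      X ^ (-t) * ((n : ℝ) + 1) ^ (-t) ≤ (nthPrime n : ℝ) ^ (-t) := by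
    intro n hn
    rw [Finset.mem_Icc] at hn
    have hp0 : (0 : ℝ) < nthPrime n := by exact_mod_cast (lt_nthPrime hn.1).pos
    rw [← Real.mul_rpow hX0.le (by positivity)]
    apply Real.rpow_le_rpow_of_nonpos hp0 _ (by linarith)
    have hm : (nthPrime n : ℝ) ≤ nthPrime N := by
      exact_mod_cast nthPrime_mono (by omega : n ≤ N)
    have := nthPrime_mul_log_two_le hn.1
    have hm2 : Real.log (nthPrime n + 1) ≤ M' := Real.log_le_log (by linarith) (by linarith)
    have : nthPrime n * Real.log 2 ≤ (n + 1) * M' := this.trans (by gcongr)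
    rw [hX, div_mul_eq_mul_div, le_div_iff₀ (by linarith)]
    linarith
  have hsum := Finset.sum_le_sum hterm
  rw [← Finset.mul_sum] at hsum
  have hlow := le_sum_rpow_neg (by linarith : 0 ≤ t) ht₂ (N - 1)
  have hNmono : (N : ℝ) ^ (1 - t) ≤ (((N - 1 : ℕ) : ℝ) + 2) ^ (1 - t) := by
    apply Real.rpow_le_rpow hN0.le _ hs.le
    rw [Nat.cast_sub hN1]; push_cast; linarith
  have hlow2 : ((N : ℝ) ^ (1 - t) - 2) / (1 - t) ≤
      ∑ n ∈ Finset.Icc 1 (N - 1), ((n : ℝ) + 1) ^ (-t) :=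
    le_trans (by gcongr) hlow
  have hP : 0.23 * X * N ≤ nthPrime N := by
    have h1 := nthPrime_ge hN1
      (le_trans (Real.exp_le_exp.2 (by norm_num)) (hNexp.trans hPN.le))
    have h2 : 0.23 * X ≤ Real.log (nthPrime N) / 2.9 := by
      rw [hX, ← mul_div_assoc, div_le_div_iff₀ (by linarith) (by norm_num)]
      nlinarith
    have h3 := mul_le_mul_of_nonneg_right h2 hN0.le
    exact h3.trans (le_trans (le_of_eq (by ring)) h1)
  have hXt : 0 < X ^ t := Real.rpow_pos_of_pos hX0 _
  have hNt : 0 < (N : ℝ) ^ t := Real.rpow_pos_of_pos hN0 _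
  have hPt : 0.23 * X ^ t * (N : ℝ) ^ t ≤ (nthPrime N : ℝ) ^ t := by
    have h1 := Real.rpow_le_rpow (by positivity) hP (by linarith : 0 ≤ t)
    rw [Real.mul_rpow (by positivity) hN0.le, Real.mul_rpow (by norm_num) hX0.le] at h1
    have h2 : (0.23 : ℝ) ≤ 0.23 ^ t := by
      simpa using Real.rpow_le_rpow_of_exponent_ge (by norm_num : (0 : ℝ) < 0.23)
        (by norm_num) ht₂.le
    exact le_trans (by gcongr) h1
  have hNN : (N : ℝ) = (N : ℝ) ^ (1 - t) * (N : ℝ) ^ t := by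
    rw [← Real.rpow_add hN0]; simp
  refine lt_of_lt_of_le ?_ ((mul_le_mul_of_nonneg_left hlow2 (by positivity)).trans hsum)
  rw [Real.rpow_neg hX0.le]
  calc 7 / 40 * ((N : ℝ) / ((1 - t) * (nthPrime N : ℝ) ^ t))
      ≤ 7 / 40 * ((N : ℝ) / ((1 - t) * (0.23 * X ^ t * (N : ℝ) ^ t))) := by gcongr
    _ = (7 / 40 / 0.23 * (N : ℝ) ^ (1 - t)) / ((1 - t) * X ^ t) := by
      nth_rewrite 1 [hNN]
      field_simp
    _ < ((N : ℝ) ^ (1 - t) - 2) / ((1 - t) * X ^ t) := by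
      apply div_lt_div_of_pos_right _ (by positivity)
      linarith
    _ = _ := by field_simp

theorem sum_nthPrime_rpow_neg_lt {t : ℝ} (ht₁ : 1 / 2 < t) (ht₂ : t < 1) {N : ℕ}
    (hN : 64 ≤ Real.log N) (hNs : 3.8 * Real.log N ≤ (N : ℝ) ^ ((1 - t) / 2)) :
    ∑ n ∈ Finset.Icc 1 (N - 1), (nthPrime n : ℝ) ^ (-t) <
      20 / 3 * ((2 : ℝ) ^ t * (N : ℝ) / ((1 - t) * (nthPrime N : ℝ) ^ t)) := by
  have hs : 0 < 1 - t := by linarith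
  have ht0 : 0 ≤ t := by linarith
  have hN0 : (0 : ℝ) < N := by
    rcases Nat.eq_zero_or_pos N with h | h
    · subst h; norm_num at hN
    · exact_mod_cast h
  have hN1 : 1 ≤ N := by exact_mod_cast hN0
  have hPN : (N : ℝ) < nthPrime N := by exact_mod_cast lt_nthPrime hN1
  have hP0 : (0 : ℝ) < nthPrime N := by linarith
  have hNbig : (64 : ℝ) < N := by linarith [Real.log_le_sub_one_of_pos hN0]
  have l2 := Real.log_two_gt_d9
  set L := Real.log N with hL
  set Y := L / 5.8 with hY
  have hY0 : 0 < Y := by positivity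
  have hterm : ∀ n ∈ Finset.Icc 1 (N - 1), (nthPrime n : ℝ) ^ (-t) ≤
      Y ^ (-t) * (n : ℝ) ^ (-t) + if n ≤ N.sqrt then (n : ℝ) ^ (-t) else 0 := by
    intro n hn
    rw [Finset.mem_Icc] at hn
    have hn0 : (0 : ℝ) < n := by exact_mod_cast hn.1
    have hnp : (n : ℝ) < nthPrime n := by exact_mod_cast lt_nthPrime hn.1
    split_ifs with h
    · have := Real.rpow_le_rpow_of_nonpos hn0 hnp.le (by linarith : -t ≤ 0)
      have : 0 ≤ Y ^ (-t) * (n : ℝ) ^ (-t) := by positivity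
      linarith
    · rw [add_zero, ← Real.mul_rpow hY0.le hn0.le]
      apply Real.rpow_le_rpow_of_nonpos (by positivity) _ (by linarith)
      have hsq : (N : ℝ) ≤ n ^ 2 := by
        have : N < n ^ 2 := by
          rw [sq]; exact Nat.sqrt_lt.1 (by omega)
        exact_mod_cast this.le
      have hlogn : L / 2 ≤ Real.log n := by
        have := Real.log_le_log hN0 hsq
        rw [Real.log_pow] at this
        push_cast at this
        linarith
      have hlogp : L / 2 ≤ Real.log (nthPrime n) :=
        hlogn.trans (Real.log_le_log hn0 hnp.le)
      have h32 : Real.exp 32 ≤ nthPrime n :=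
        (Real.le_log_iff_exp_le (by linarith)).1 (by linarith)
      refine le_trans ?_ (nthPrime_ge hn.1 h32)
      rw [hY, le_div_iff₀ (by norm_num)]
      calc L / 5.8 * n * 2.9 = n * (L / 2) := by ring
        _ ≤ _ := by gcongr
  have hsum := Finset.sum_le_sum hterm
  rw [Finset.sum_add_distrib, ← Finset.mul_sum, ← Finset.sum_filter] at hsum
  have hA : ∑ n ∈ Finset.Icc 1 (N - 1), (n : ℝ) ^ (-t) ≤ (N : ℝ) ^ (1 - t) / (1 - t) := by
    refine (sum_rpow_neg_le ht0 ht₂ _).trans ?_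
    have : ((N - 1 : ℕ) : ℝ) ≤ N := by exact_mod_cast Nat.sub_le N 1
    gcongr
  have hB : ∑ n ∈ Finset.Icc 1 (N - 1) with n ≤ N.sqrt, (n : ℝ) ^ (-t) ≤
      (N : ℝ) ^ ((1 - t) / 2) / (1 - t) := by
    have hsub : {n ∈ Finset.Icc 1 (N - 1) | n ≤ N.sqrt} ⊆ Finset.Icc 1 N.sqrt := by
      intro n hn
      simp only [Finset.mem_filter, Finset.mem_Icc] at hn ⊢
      omega
    refine (Finset.sum_le_sum_of_subset_of_nonneg hsub fun _ _ _ => by positivity).trans ?_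
    refine (sum_rpow_neg_le ht0 ht₂ _).trans ?_
    have : (N.sqrt : ℝ) ^ (1 - t) ≤ (N : ℝ) ^ ((1 - t) / 2) := by
      calc (N.sqrt : ℝ) ^ (1 - t) ≤ (√(N : ℝ)) ^ (1 - t) := by
            gcongr; exact Real.nat_sqrt_le_real_sqrt
        _ = _ := by
          rw [Real.sqrt_eq_rpow, ← Real.rpow_mul hN0.le]; congr 1; ring
    gcongr
  have hP : (nthPrime N : ℝ) ≤ 1.9 * L * N := by
    have h1 := nthPrime_mul_log_two_le hN1
    have h2 := log_nthPrime_add_one_le hN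
    have h3 : nthPrime N * Real.log 2 ≤ (N + 1) * (1.25 * L) := h1.trans (by gcongr)
    have h4 : nthPrime N * 0.69 ≤ nthPrime N * Real.log 2 := by gcongr; linarith
    have h5 : 64 * L ≤ N * L := by gcongr
    nlinarith
  set Z := 1.9 * L with hZ
  have hZ0 : 0 < Z := by positivity
  have hZt : 0 < Z ^ t := Real.rpow_pos_of_pos hZ0 _
  have hPt : (nthPrime N : ℝ) ^ t ≤ Z ^ t * (N : ℝ) ^ t := by
    rw [← Real.mul_rpow hZ0.le hN0.le]
    exact Real.rpow_le_rpow hP0.le hP ht0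
  have hPt0 : 0 < (nthPrime N : ℝ) ^ t := Real.rpow_pos_of_pos hP0 _
  have hNt : 0 < (N : ℝ) ^ t := Real.rpow_pos_of_pos hN0 _
  have hNN : (N : ℝ) = (N : ℝ) ^ (1 - t) * (N : ℝ) ^ t := by
    rw [← Real.rpow_add hN0]; simp
  have h2t : 1 ≤ (2 : ℝ) ^ t := Real.one_le_rpow (by norm_num) ht0
  have hYZ : Y ^ (-t) ≤ 5.51 * 2 ^ t / Z ^ t := by
    have e : Y = Z / (5.51 * 2) := by rw [hY, hZ]; ring
    rw [Real.rpow_neg hY0.le, e, Real.div_rpow hZ0.le (by norm_num), inv_div,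
      Real.mul_rpow (by norm_num) (by norm_num)]
    have : (5.51 : ℝ) ^ t ≤ 5.51 := by
      simpa using Real.rpow_le_rpow_of_exponent_le (by norm_num : (1 : ℝ) ≤ 5.51) ht₂.le
    gcongr
  have hsmall : (N : ℝ) ^ ((1 - t) / 2) ≤ 0.5 * (N : ℝ) ^ (1 - t) / Z ^ t := by
    have h1 : Z ^ t ≤ Z := by
      simpa using Real.rpow_le_rpow_of_exponent_le (by linarith : 1 ≤ Z) ht₂.le
    have e : (N : ℝ) ^ (1 - t) = (N : ℝ) ^ ((1 - t) / 2) * (N : ℝ) ^ ((1 - t) / 2) := by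
      rw [← Real.rpow_add hN0]; congr 1; ring
    have hpos : 0 < (N : ℝ) ^ ((1 - t) / 2) := Real.rpow_pos_of_pos hN0 _
    rw [le_div_iff₀ hZt, e]
    have : Z ^ t ≤ 0.5 * (N : ℝ) ^ ((1 - t) / 2) := by linarith
    nlinarith
  have hNs0 : 0 < (N : ℝ) ^ (1 - t) := Real.rpow_pos_of_pos hN0 _
  calc _ ≤ Y ^ (-t) * ((N : ℝ) ^ (1 - t) / (1 - t)) + (N : ℝ) ^ ((1 - t) / 2) / (1 - t) :=
        hsum.trans (add_le_add (mul_le_mul_of_nonneg_left hA (by positivity)) hB)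
    _ ≤ (5.51 * 2 ^ t / Z ^ t) * ((N : ℝ) ^ (1 - t) / (1 - t)) +
        (0.5 * (N : ℝ) ^ (1 - t) / Z ^ t) / (1 - t) := by gcongr
    _ = (5.51 * 2 ^ t + 0.5) * ((N : ℝ) ^ (1 - t) / ((1 - t) * Z ^ t)) := by
      field_simp
    _ < (20 / 3 * 2 ^ t) * ((N : ℝ) ^ (1 - t) / ((1 - t) * Z ^ t)) := by
      apply mul_lt_mul_of_pos_right _ (by positivity)
      linarith
    _ = 20 / 3 * ((2 : ℝ) ^ t * (N : ℝ) / ((1 - t) * (Z ^ t * (N : ℝ) ^ t))) := by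
      nth_rewrite 2 [hNN]
      field_simp
    _ ≤ _ := by gcongr

theorem sum_reciprocal_prime_powers_vs_nth_prime
    (t : ℝ) (ht₁ : 1 / 2 < t) (ht₂ : t < 1)
    (n₁ : ℕ) (hn₁ : 2 * Real.exp (16 / (1 - t) ^ 2) ≤ (n₁ : ℝ)) :
    7 / 40 * ((n₁ : ℝ) / ((1 - t) * (nthPrime n₁ : ℝ) ^ t)) <
        (∑ n ∈ Finset.Icc 1 (n₁ - 1), (nthPrime n : ℝ) ^ (-t)) ∧
      (∑ n ∈ Finset.Icc 1 (n₁ - 1), (nthPrime n : ℝ) ^ (-t)) <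
        20 / 3 * ((2 : ℝ) ^ t * (n₁ : ℝ) / ((1 - t) * (nthPrime n₁ : ℝ) ^ t)) := by
  have hs : 0 < 1 - t := by linarith
  have hE := Real.exp_pos (16 / (1 - t) ^ 2)
  have hN0 : (0 : ℝ) < n₁ := by linarith
  have hL : 16 / (1 - t) ^ 2 ≤ Real.log n₁ := (Real.le_log_iff_exp_le hN0).2 (by linarith)
  rw [div_le_iff₀ (by positivity)] at hL
  have hs2 : (1 - t) ^ 2 ≤ 1 / 4 := by nlinarith
  have hL64 : 64 ≤ Real.log n₁ := by nlinarith
  set u := Real.log n₁ * ((1 - t) / 2) with hu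
  have hexp : (n₁ : ℝ) ^ ((1 - t) / 2) = Real.exp u := Real.rpow_def_of_pos hN0 _
  have hu16 : 16 ≤ u := by nlinarith
  have hcube : u ^ 3 / 6 ≤ Real.exp u := by
    simpa [Nat.factorial] using Real.pow_div_factorial_le_exp u (by linarith) 3
  have hLu : 4 * Real.log n₁ ≤ u ^ 2 := by
    rw [hu]
    nlinarith
  have hNs : 3.8 * Real.log n₁ ≤ (n₁ : ℝ) ^ ((1 - t) / 2) := by
    rw [hexp]
    nlinarith [sq_nonneg u]
  refine ⟨lt_sum_nthPrime_rpow_neg ht₁ ht₂ hL64 ?_, sum_nthPrime_rpow_neg_lt ht₁ ht₂ hL64 hNs⟩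
  have h1 : (1 : ℝ) ≤ n₁ := by linarith [Real.log_le_sub_one_of_pos hN0]
  have := Real.rpow_le_rpow_of_exponent_le h1 (by linarith : (1 - t) / 2 ≤ 1 - t)
  linarith
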